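/- Let L ⊆ Σ* be Wheeler with respect to (Σ,≺), let A be the minimum DFA recognizing L with n states, and set d = n + n². Let Pref(L)^{≤d} = {α ∈ Pref(L) : |α| ≤ d}, listed in co-lexicographic order as α₁ ≺ α₂ ≺ … ≺ α_k. Then for every 1 ≤ j < k: α_j ≡^c_L α_{j+1} if and only if α_j ≡_L α_{j+1} and α_j and α_{j+1} end with the same character. -/

import Mathlib

/-!
Common framework: words over an ordered alphabet, co-lexicographic order,
(partial) DFAs and NFAs, Wheeler automata and Wheeler languages,
following "Ordering regular languages: a danger zone".
-/

namespace WheelerPaper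

/-- Strict co-lexicographic order on words: compare the reverses lexicographically. -/
def Colex {A : Type} [LinearOrder A] (x y : List A) : Prop :=
  List.Lex (· < ·) x.reverse y.reverse

/-- Non-strict co-lexicographic order. -/
def ColexLE {A : Type} [LinearOrder A] (x y : List A) : Prop :=
  Colex x y ∨ x = y

/-- Right context `α⁻¹L` of a word `α` with respect to a language `L`. -/
def rc {A : Type} (L : Set (List A)) (α : List A) : Set (List A) :=
  {γ | α ++ γ ∈ L}

/-- `Pref L`: the set of prefixes of words of `L`. -/
def Pref {A : Type} (L : Set (List A)) : Set (List A) :=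
  {α | ∃ β, α ++ β ∈ L}

/-- `wpow γ i` is `γ^i`, the `i`-fold concatenation of the word `γ`. -/
def wpow {A : Type} (γ : List A) : ℕ → List A
  | 0 => []
  | n + 1 => γ ++ wpow γ n

/-- A DFA with a possibly partial transition function. -/
structure PDFA (A : Type) (Q : Type) where
  init : Q
  trans : Q → A → Option Q
  accept : Q → Prop

/-- Extended (partial) transition function of a `PDFA`. -/
def PDFA.evalFrom {A Q : Type} (M : PDFA A Q) : Q → List A → Option Q
  | q, [] => some q
  | q, a :: w => (M.trans q a).bind fun q' => PDFA.evalFrom M q' w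

/-- The language accepted by a `PDFA`. -/
def PDFA.accepts {A Q : Type} (M : PDFA A Q) : Set (List A) :=
  {w | ∃ q, M.evalFrom M.init w = some q ∧ M.accept q}

/-- A `PDFA` is trim if every state is reachable from the initial state and
every state can reach some accepting state. -/
def PDFA.Trim {A Q : Type} (M : PDFA A Q) : Prop :=
  (∀ q : Q, ∃ α, M.evalFrom M.init α = some q) ∧
  (∀ q : Q, ∃ α q', M.evalFrom q α = some q' ∧ M.accept q')

/-- `r` is a Wheeler order for the DFA `M`: a strict total order on states whose
minimum is the initial state, the initial state has no incoming transitions, and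
the two Wheeler conditions hold. -/
def IsWheelerOrder {A Q : Type} [LinearOrder A] (M : PDFA A Q) (r : Q → Q → Prop) : Prop :=
  IsStrictTotalOrder Q r ∧
  (∀ q : Q, q ≠ M.init → r M.init q) ∧
  (∀ (q : Q) (a : A), M.trans q a ≠ some M.init) ∧
  (∀ (u₁ : Q) (a₁ : A) (v₁ : Q) (u₂ : Q) (a₂ : A) (v₂ : Q),
     M.trans u₁ a₁ = some v₁ → M.trans u₂ a₂ = some v₂ →
     (a₁ < a₂ → r v₁ v₂) ∧ (a₁ = a₂ → r u₁ u₂ → (r v₁ v₂ ∨ v₁ = v₂)))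

/-- A language is Wheeler (w.r.t. the given order on the alphabet) if it is
recognized by some Wheeler DFA. -/
def IsWheelerLang {A : Type} [LinearOrder A] (L : Set (List A)) : Prop :=
  ∃ (n : ℕ) (M : PDFA A (Fin n)) (r : Fin n → Fin n → Prop),
    IsWheelerOrder M r ∧ M.accepts = L

/-- A language is regular if it is recognized by some finite-state (partial) DFA. -/
def IsRegular {A : Type} (L : Set (List A)) : Prop :=
  ∃ (k : ℕ) (M : PDFA A (Fin k)), M.accepts = L

/-- The input-consistent convex refinement `≡^c_L` of the Myhill–Nerode
equivalence: same right context, same last character (or both empty), and every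
word of `Pref L` co-lexicographically between the two words has the same right
context. -/
def EquivC {A : Type} [LinearOrder A] (L : Set (List A)) (α β : List A) : Prop :=
  rc L α = rc L β ∧ α.getLast? = β.getLast? ∧
  ∀ γ ∈ Pref L,
    ((ColexLE α γ ∧ ColexLE γ β) ∨ (ColexLE β γ ∧ ColexLE γ α)) →
    rc L γ = rc L α

/-- An NFA with a single initial state. -/
structure NFA' (A : Type) (Q : Type) where
  init : Q
  trans : Q → A → Set Q
  accept : Q → Prop

/-- One step of an `NFA'` on a set of states. -/
def NFA'.stepSet {A Q : Type} (M : NFA' A Q) (S : Set Q) (a : A) : Set Q :=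
  {q | ∃ p ∈ S, q ∈ M.trans p a}

/-- Extended transition function of an `NFA'` on sets of states. -/
def NFA'.evalFrom {A Q : Type} (M : NFA' A Q) : Set Q → List A → Set Q
  | S, [] => S
  | S, a :: w => NFA'.evalFrom M (M.stepSet S a) w

/-- The language accepted by an `NFA'`. -/
def NFA'.accepts {A Q : Type} (M : NFA' A Q) : Set (List A) :=
  {w | ∃ q ∈ M.evalFrom {M.init} w, M.accept q}

/-- An `NFA'` is trim if every state is reachable from the initial state and
every state can reach some accepting state. -/
def NFA'.Trim {A Q : Type} (M : NFA' A Q) : Prop :=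
  (∀ q : Q, ∃ α, q ∈ M.evalFrom {M.init} α) ∧
  (∀ q : Q, ∃ α, ∃ q' ∈ M.evalFrom {q} α, M.accept q')

/-- `r` is a Wheeler order for the NFA `M`. -/
def IsWheelerNFAOrder {A Q : Type} [LinearOrder A] (M : NFA' A Q) (r : Q → Q → Prop) : Prop :=
  IsStrictTotalOrder Q r ∧
  (∀ q : Q, q ≠ M.init → r M.init q) ∧
  (∀ (q : Q) (a : A), M.init ∉ M.trans q a) ∧
  (∀ (u₁ : Q) (a₁ : A) (v₁ : Q) (u₂ : Q) (a₂ : A) (v₂ : Q),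
     v₁ ∈ M.trans u₁ a₁ → v₂ ∈ M.trans u₂ a₂ →
     (a₁ < a₂ → r v₁ v₂) ∧ (a₁ = a₂ → r u₁ u₂ → (r v₁ v₂ ∨ v₁ = v₂)))

/-- `I` is an interval with respect to the strict order `r`. -/
def IsIntervalRel {Q : Type} (r : Q → Q → Prop) (I : Set Q) : Prop :=
  ∀ x y z : Q, (r x y ∨ x = y) → (r y z ∨ y = z) → x ∈ I → z ∈ I → y ∈ I

/-- The class of star-free languages: built from `∅`, `{ε}` and the singletons
`{a}` by union, concatenation and complement. -/
inductive StarFree {A : Type} : Set (List A) → Prop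
  | empty : StarFree ∅
  | eps : StarFree {[]}
  | single (a : A) : StarFree {[a]}
  | union {L₁ L₂ : Set (List A)} : StarFree L₁ → StarFree L₂ → StarFree (L₁ ∪ L₂)
  | concat {L₁ L₂ : Set (List A)} : StarFree L₁ → StarFree L₂ →
      StarFree {w | ∃ u v, u ∈ L₁ ∧ v ∈ L₂ ∧ w = u ++ v}
  | compl {L : Set (List A)} : StarFree L → StarFree Lᶜ


/-- The language of all words over the sub-alphabet `S`. -/
def wordsOver {A : Type} (S : Set A) : Language A := {w | ∀ x ∈ w, x ∈ S}


/-!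
It suffices to see that if some prefix of `L` lies strictly between `α` and `β` and has another
right context than both, then so does one of length less than `n²`, where `n` is the number of
states of a DFA for `L`. Let `γ` be a shortest such word (of given right context).

Cut `γ = v ++ z` at each position and record the state `q` reached by `v` and the state `p` reached
by `α` with its suffix `z` removed (if `z` is a suffix of `α`). Pumping the part of `γ` between two
positions gives monotone sequences, along which the right contexts in a Wheeler language stabilize.
Hence `(q, p)` and `(p, q)` are never both recorded, for then `α` and `γ` would have the same right
context. So at most `n(n - 1)/2` pairs are recorded for `α`, and likewise for `β`.

Next fix `q` and order the positions that reach `q` by the co-lexicographic order of `v`. If `v`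
and a longer `v'` reach `q` and `v ≺ v'`, cutting out the factor between them moves `γ` down, hence
by minimality to `α` or below; symmetrically for `v' ≺ v` and `β`. Together with pumping, this shows
that of two consecutive positions the second has a `p`-value for `α` not seen before or the first
has a `p`-value for `β` not seen again, so there are fewer positions reaching `q` than `p`-values
for `α` and `β` together. Summing over `q`, where the case that `z` is no suffix counts as one more
value on each side, gives `|γ| < 2 · n(n - 1)/2 + n = n²`.
-/

section Counting

theorem two_mul_card_add_card_le_of_asymm {Q : Type*} [Fintype Q] {D : Finset (Q × Q)}
    (hD : ∀ p q, (p, q) ∈ D → (q, p) ∉ D) :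
    2 * D.card + Fintype.card Q ≤ Fintype.card Q ^ 2 := by
  classical
  have hdisj : Disjoint D (D.map (Equiv.prodComm Q Q).toEmbedding) := by
    simp only [Finset.disjoint_left, Finset.mem_map_equiv]
    exact fun ⟨p, q⟩ hpq hqp => hD p q hpq hqp
  have hsub : D.disjUnion _ hdisj ⊆ (Finset.univ : Finset Q).offDiag := by
    rintro ⟨p, q⟩ hpq
    simp only [Finset.mem_disjUnion, Finset.mem_map_equiv] at hpq
    simp only [Finset.mem_offDiag, Finset.mem_univ, true_and]
    rintro rfl
    exact hpq.elim (fun h => hD p p h h) (fun h => hD p p h h)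
  have hcard := Finset.card_le_card hsub
  rw [Finset.card_disjUnion, Finset.card_map, Finset.offDiag_card, Finset.card_univ] at hcard
  have := Nat.le_mul_self (Fintype.card Q)
  rw [pow_two]
  omega

section Injection

variable {ι W P : Type*} [LinearOrder W] {S T U : Finset ι} {w : ι → W} {p r : ι → P}

theorem card_le_card_image_of_forall_lt_ne [DecidableEq P] (hw : Set.InjOn w S) (hT : T ⊆ S)
    (h : ∀ b ∈ T, ∀ a ∈ S, w a < w b → p a ≠ p b) : T.card ≤ (S.image p).card := by
  refine Finset.card_le_card_of_injOn p (fun b hb => Finset.mem_image_of_mem p (hT hb))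
    fun a ha b hb hab => hw (hT ha) (hT hb) (le_antisymm ?_ ?_)
  · exact not_lt.1 fun hlt => h a ha b (hT hb) hlt hab.symm
  · exact not_lt.1 fun hlt => h b hb a (hT ha) hlt hab

theorem card_le_card_of_forall_exists_pred (hw : Set.InjOn w S) (hT : T ⊆ S)
    (h : ∀ b ∈ T, ∃ a ∈ U, w a < w b ∧ ∀ c ∈ S, w c < w b → w c ≤ w a) : T.card ≤ U.card := by
  choose! pred hpred pred_lt le_pred using h
  refine Finset.card_le_card_of_injOn pred hpred fun b hb b' hb' heq => ?_
  refine hw (hT hb) (hT hb') (le_antisymm (not_lt.1 fun hlt => ?_) (not_lt.1 fun hlt => ?_))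
  · exact (le_pred b hb b' (hT hb') hlt).not_gt (heq ▸ pred_lt b' hb')
  · exact (le_pred b' hb' b (hT hb) hlt).not_gt (heq ▸ pred_lt b hb)

/- Call `b` fresh if no `w`-smaller element of `S` shares its `p`-label, and final if no `w`-larger
one shares its `r`-label. If `b` follows `a` in the `w`-order then `b` is fresh or `a` is final:
otherwise `hp` gives `b < a` and `hr` gives `a < b`. -/
theorem card_lt_card_image_add_card_image [Preorder ι] [DecidableEq P] (hS : S.Nonempty)
    (hw : Set.InjOn w S)
    (hp : ∀ a ∈ S, ∀ b ∈ S, w a < w b → p a = p b → ∀ c ∈ S, w a ≤ w c → w c < w b → b < c)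
    (hr : ∀ a ∈ S, ∀ b ∈ S, w a < w b → r a = r b → ∀ c ∈ S, w a < w c → w c ≤ w b → a < c) :
    S.card < (S.image p).card + (S.image r).card := by
  classical
  set fresh := {b ∈ S | ∀ a ∈ S, w a < w b → p a ≠ p b} with hfresh
  set final := {a ∈ S | ∀ b ∈ S, w a < w b → r b ≠ r a}
  have card_fresh : fresh.card ≤ (S.image p).card :=
    card_le_card_image_of_forall_lt_ne hw (Finset.filter_subset _ _)
      fun b hb => (Finset.mem_filter.1 hb).2
  have card_final : final.card ≤ (S.image r).card :=
    card_le_card_image_of_forall_lt_ne (w := OrderDual.toDual ∘ w) hw (Finset.filter_subset _ _)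
      fun a ha => (Finset.mem_filter.1 ha).2
  obtain ⟨top, htop, le_top⟩ := S.exists_max_image w hS
  have top_final : top ∈ final :=
    Finset.mem_filter.2 ⟨htop, fun b hb h => absurd h (le_top b hb).not_gt⟩
  have card_not_fresh : (S \ fresh).card ≤ (final.erase top).card := by
    refine card_le_card_of_forall_exists_pred hw Finset.sdiff_subset fun b hb => ?_
    obtain ⟨hbS, hb⟩ := Finset.mem_sdiff.1 hb
    obtain ⟨a', ha', hab', hpab'⟩ : ∃ a ∈ S, w a < w b ∧ p a = p b := by
      simpa [hfresh, hbS] using hb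
    obtain ⟨a, ha, le_a⟩ := {c ∈ S | w c < w b}.exists_max_image w
      ⟨a', Finset.mem_filter.2 ⟨ha', hab'⟩⟩
    obtain ⟨haS, hab⟩ := Finset.mem_filter.1 ha
    have le_a c (hc : c ∈ S) (h : w c < w b) : w c ≤ w a := le_a c (Finset.mem_filter.2 ⟨hc, h⟩)
    have a_final : a ∈ final := by
      refine Finset.mem_filter.2 ⟨haS, fun d hd had hrad => ?_⟩
      have hba : b < a := hp a' ha' b hbS hab' hpab' a haS (le_a a' ha' hab') hab
      have hbd : w b ≤ w d := not_lt.1 fun h => (le_a d hd h).not_gt had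
      exact lt_asymm hba (hr a haS d hd had hrad.symm b hbS hab hbd)
    have a_ne_top : a ≠ top := fun h => (le_top b hbS).not_gt (h ▸ hab)
    exact ⟨a, Finset.mem_erase.2 ⟨a_ne_top, a_final⟩, hab, le_a⟩
  have hsplit : (S \ fresh).card + fresh.card = S.card :=
    Finset.card_sdiff_add_card_eq_card (Finset.filter_subset _ _)
  have := Finset.card_erase_add_one top_final
  omega

end Injection

theorem exists_eq_of_interlaced {P : Type*} [PartialOrder P] [WellFoundedGT P] {s t : ℕ → P}
    (hst : ∀ i, s i ≤ t i) (hts : ∀ i, t i ≤ s (i + 1)) : ∃ i, s i = t i := by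
  obtain ⟨i, hi⟩ := WellFoundedGT.monotone_chain_condition
    ⟨s, monotone_nat_of_le_succ fun i => (hst i).trans (hts i)⟩
  exact ⟨i, (hst i).antisymm ((hts i).trans_eq (hi (i + 1) i.le_succ).symm)⟩

end Counting

section Words

variable {A : Type}

theorem length_wpow (y : List A) (i : ℕ) : (wpow y i).length = i * y.length := by
  induction i with
  | zero => simp [wpow]
  | succ i ih => rw [wpow, List.length_append, ih, Nat.succ_mul, Nat.add_comm]

theorem append_append_wpow (x y : List A) (i : ℕ) :
    x ++ y ++ wpow y i = x ++ wpow y (i + 1) :=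
  List.append_assoc ..

theorem exists_take_eq_drop_eq (γ : List A) {k l : ℕ} (hkl : k < l) (hl : l ≤ γ.length) :
    ∃ y ≠ [], γ.take l = γ.take k ++ y ∧ γ.drop k = y ++ γ.drop l := by
  refine ⟨(γ.drop k).take (l - k), ?_, ?_, ?_⟩
  · rw [Ne, List.take_eq_nil_iff, List.drop_eq_nil_iff]
    omega
  · rw [← List.take_add, Nat.add_sub_cancel' hkl.le]
  · conv_lhs => rw [← List.take_append_drop (l - k) (γ.drop k)]
    rw [List.drop_drop, Nat.add_sub_cancel' hkl.le]

theorem mem_pref_of_rc_eq {L : Set (List A)} {x y : List A} (h : rc L x = rc L y)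
    (hx : x ∈ Pref L) : y ∈ Pref L := by
  obtain ⟨t, ht⟩ : (rc L x).Nonempty := hx
  exact ⟨t, (h ▸ ht : t ∈ rc L y)⟩

end Words

/-- A strict total order on words that is invariant under appending a common suffix, and in which
the comparison of `x` with a word ending in `z` depends on `z` only, unless `z` is a suffix of `x`.
Both `Colex` and its converse are such orders, so a statement about the left end of an interval of
words, proved for all suffix orders, also covers its right end. -/
class IsSuffixOrder {A : Type} (R : List A → List A → Prop) : Prop
    extends IsStrictTotalOrder (List A) R where
  append_right : ∀ {x y : List A}, R x y → ∀ z, R (x ++ z) (y ++ z)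
  append_of_not_suffix : ∀ {x g z : List A}, ¬ z <:+ x → R x (g ++ z) → ∀ h, R x (h ++ z)

namespace IsSuffixOrder

variable {A : Type} {R : List A → List A → Prop} [IsSuffixOrder R] {x y z : List A}

theorem append_right_iff : R (x ++ z) (y ++ z) ↔ R x y := by
  refine ⟨fun h => ?_, fun h => append_right h z⟩
  rcases trichotomous_of R x y with hxy | rfl | hyx
  · exact hxy
  · exact absurd h (irrefl _)
  · exact absurd h (asymm (append_right hyx z))

instance swap : IsSuffixOrder (Function.swap R) where
  append_right h z := append_right (R := R) h z
  append_of_not_suffix {x g z} hz hgx h := by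
    rcases trichotomous_of R x (h ++ z) with hx | rfl | hx
    · exact absurd hgx (asymm (append_of_not_suffix hz hx g))
    · exact absurd (List.suffix_append h z) hz
    · exact hx

theorem rel_append_or_append_rel (hy : y ≠ []) (x : List A) : R x (x ++ y) ∨ R (x ++ y) x := by
  rcases trichotomous_of R x (x ++ y) with h | h | h
  · exact Or.inl h
  · exact absurd (List.self_eq_append_right.1 h) hy
  · exact Or.inr h

theorem rel_append_wpow (h : R x (x ++ y)) (i : ℕ) : R x (x ++ wpow y (i + 1)) := by
  induction i with
  | zero => simpa [wpow] using h
  | succ i ih =>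
    rw [← append_append_wpow]
    exact _root_.trans ih (append_right h _)

theorem exists_forall_rel_append_wpow (hy : y ≠ []) (h : R x (x ++ y)) :
    ∃ m, ∀ u, R x (u ++ wpow y m) := by
  refine ⟨x.length + 1, append_of_not_suffix (fun hsuffix => ?_) (rel_append_wpow h x.length)⟩
  have hle := hsuffix.length_le
  rw [length_wpow] at hle
  have := Nat.le_mul_of_pos_right (x.length + 1) (List.length_pos_iff.2 hy)
  omega

end IsSuffixOrder

section Colex

variable {A : Type} [LinearOrder A]

theorem lex_append_of_not_prefix {z : List A} : ∀ {x g : List A}, ¬ z <+: x →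
    List.Lex (· < ·) x (z ++ g) → ∀ h, List.Lex (· < ·) x (z ++ h) := by
  induction z with
  | nil => exact fun hz => absurd List.nil_prefix hz
  | cons a z ih =>
    intro x g hz hx h
    cases hx with
    | nil => exact List.Lex.nil
    | rel hlt => exact List.Lex.rel hlt
    | cons hx => exact List.Lex.cons (ih (fun hzx => hz (by simpa using hzx)) hx h)

instance : IsSuffixOrder (Colex (A := A)) where
  toIsStrictTotalOrder := (RelEmbedding.preimage ⟨List.reverse, List.reverse_injective⟩
    ((· < ·) : List A → List A → Prop)).isStrictTotalOrder
  append_right h z := by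
    simpa only [Colex, List.reverse_append] using List.Lex.append_left _ h z.reverse
  append_of_not_suffix hz hx h := by
    simp only [Colex, List.reverse_append] at hx ⊢
    exact lex_append_of_not_prefix (by rwa [List.reverse_prefix]) hx _

end Colex

namespace PDFA

variable {A Q : Type} (M : PDFA A Q)

/-- The state reached from the initial state, if any. -/
def eval (w : List A) : Option Q :=
  M.evalFrom M.init w

theorem evalFrom_append (q : Q) (x y : List A) :
    M.evalFrom q (x ++ y) = (M.evalFrom q x).bind fun p => M.evalFrom p y := by
  induction x generalizing q with
  | nil => rfl
  | cons a x ih => simp only [List.cons_append, evalFrom, ih, Option.bind_assoc]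

theorem eval_append (x y : List A) :
    M.eval (x ++ y) = (M.eval x).bind fun p => M.evalFrom p y :=
  M.evalFrom_append _ x y

variable {M}

theorem eval_append_congr {x x' : List A} (h : M.eval x = M.eval x') (y : List A) :
    M.eval (x ++ y) = M.eval (x' ++ y) := by
  rw [eval_append, eval_append, h]

theorem rc_accepts_congr {x x' : List A} (h : M.eval x = M.eval x') :
    rc M.accepts x = rc M.accepts x' := by
  ext t
  change (∃ q, M.eval (x ++ t) = some q ∧ _) ↔ (∃ q, M.eval (x' ++ t) = some q ∧ _)
  rw [eval_append_congr h]

theorem exists_eval_eq_some {x y : List A} (h : x ++ y ∈ Pref M.accepts) :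
    ∃ q, M.eval x = some q := by
  obtain ⟨t, q, hq, -⟩ := h
  change M.eval _ = _ at hq
  rw [List.append_assoc, eval_append] at hq
  obtain ⟨p, hp, -⟩ := Option.bind_eq_some_iff.1 hq
  exact ⟨p, hp⟩

theorem eval_append_wpow {x y : List A} (h : M.eval (x ++ y) = M.eval x) (i : ℕ) :
    M.eval (x ++ wpow y i) = M.eval x := by
  induction i with
  | zero => simp [wpow]
  | succ i ih => rw [← append_append_wpow, eval_append_congr h, ih]

theorem rc_append_wpow_append {x y : List A} (h : M.eval (x ++ y) = M.eval x) (z : List A)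
    (i : ℕ) : rc M.accepts (x ++ wpow y i ++ z) = rc M.accepts (x ++ z) :=
  rc_accepts_congr (eval_append_congr (eval_append_wpow h i) z)

open Classical in
/-- The state reached by `τ` after its suffix `z` is removed; `none` if `z` is not a suffix. -/
noncomputable def evalBefore (M : PDFA A Q) (τ z : List A) : Option Q :=
  if z <:+ τ then M.eval (τ.rdrop z.length) else none

theorem evalBefore_append (u z : List A) : M.evalBefore (u ++ z) z = M.eval u := by
  rw [evalBefore, if_pos (List.suffix_append u z), List.rdrop_append_length]

theorem exists_eq_append_of_evalBefore_eq_some {τ z : List A} {q : Q}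
    (h : M.evalBefore τ z = some q) : ∃ u, τ = u ++ z ∧ M.eval u = some q := by
  by_cases hz : z <:+ τ
  · obtain ⟨u, rfl⟩ := hz
    exact ⟨u, rfl, by rw [← h, evalBefore_append]⟩
  · simp [evalBefore, hz] at h

theorem suffix_congr_of_evalBefore_eq {τ z z' : List A} (hτ : τ ∈ Pref M.accepts)
    (h : M.evalBefore τ z = M.evalBefore τ z') (hz : z <:+ τ) : z' <:+ τ := by
  obtain ⟨u, rfl⟩ := hz
  obtain ⟨q, hq⟩ := exists_eval_eq_some hτ
  rw [evalBefore_append, hq] at h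
  obtain ⟨v, hv, -⟩ := exists_eq_append_of_evalBefore_eq_some h.symm
  exact ⟨v, hv.symm⟩

end PDFA

section Wheeler

variable {A Q : Type}

/-- Whenever two sequences `x`, `y` of prefixes of `L` are interlaced, `x₀, y₀, x₁, y₁, …` being
monotone for `R`, some `x i` and `y i` have the same right context. Wheeler languages have this
property for `Colex`, since right contexts are eventually constant along monotone sequences. -/
def InterlacedMeet (L : Set (List A)) (R : List A → List A → Prop) : Prop :=
  ∀ x y : ℕ → List A, (∀ i, x i ∈ Pref L) → (∀ i, y i ∈ Pref L) →
    ((∀ i, R (x i) (y i) ∧ R (y i) (x (i + 1))) ∨ (∀ i, R (y i) (x i) ∧ R (x (i + 1)) (y i))) →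
    ∃ i, rc L (x i) = rc L (y i)

theorem InterlacedMeet.swap {L : Set (List A)} {R : List A → List A → Prop}
    (h : InterlacedMeet L R) : InterlacedMeet L (Function.swap R) :=
  fun x y hx hy hxy => h x y hx hy hxy.symm

variable [LinearOrder A]

theorem IsWheelerOrder.eq_or_rel_of_colex {M : PDFA A Q} {r : Q → Q → Prop}
    (hr : IsWheelerOrder M r) {x y : List A} {p q : Q} (hxy : Colex x y)
    (hp : M.eval x = some p) (hq : M.eval y = some q) : p = q ∨ r p q := by
  obtain ⟨-, hinit, -, hstep⟩ := hr
  induction x using List.reverseRecOn generalizing y p q with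
  | nil =>
    obtain rfl : M.init = p := Option.some.inj hp
    exact or_iff_not_imp_left.2 fun hne => hinit q (Ne.symm hne)
  | append_singleton x a ih =>
    obtain rfl | ⟨y, b, rfl⟩ := y.eq_nil_or_concat'
    · simp [Colex] at hxy
    obtain ⟨p', hp', hpa⟩ := Option.bind_eq_some_iff.1 (M.eval_append x [a] ▸ hp)
    obtain ⟨q', hq', hqb⟩ := Option.bind_eq_some_iff.1 (M.eval_append y [b] ▸ hq)
    replace hpa : M.trans p' a = some p := by simpa [PDFA.evalFrom] using hpa
    replace hqb : M.trans q' b = some q := by simpa [PDFA.evalFrom] using hqb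
    obtain ⟨hlt, heq⟩ := hstep p' a p q' b q hpa hqb
    simp only [Colex, List.reverse_append, List.reverse_singleton, List.singleton_append] at hxy
    cases hxy with
    | rel hab => exact Or.inr (hlt hab)
    | cons hxy =>
      rcases ih hxy hp' hq' with rfl | hpq'
      · exact Or.inl (Option.some.inj (hpa.symm.trans hqb))
      · exact (heq rfl hpq').symm

theorem IsWheelerOrder.interlacedMeet [Finite Q] {M : PDFA A Q} {r : Q → Q → Prop}
    (hr : IsWheelerOrder M r) : InterlacedMeet M.accepts Colex := by
  intro x y hx hy hxy
  have := hr.1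
  let _ : PartialOrder Q := partialOrderOfSO r
  have hmono {u v : List A} {p q : Q} (huv : Colex u v) (hp : M.eval u = some p)
      (hq : M.eval v = some q) : p ≤ q := hr.eq_or_rel_of_colex huv hp hq
  choose s hs using fun i => PDFA.exists_eval_eq_some (y := []) (by simpa using hx i)
  choose t ht using fun i => PDFA.exists_eval_eq_some (y := []) (by simpa using hy i)
  suffices ∃ i, s i = t i by
    obtain ⟨i, hi⟩ := this
    exact ⟨i, PDFA.rc_accepts_congr (by rw [hs, ht, hi])⟩
  rcases hxy with hxy | hxy
  · exact exists_eq_of_interlaced (fun i => hmono (hxy i).1 (hs i) (ht i))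
      (fun i => hmono (hxy i).2 (ht i) (hs (i + 1)))
  · exact exists_eq_of_interlaced (P := Qᵒᵈ) (fun i => hmono (hxy i).1 (ht i) (hs i))
      (fun i => hmono (hxy i).2 (hs (i + 1)) (ht i))

theorem IsWheelerLang.interlacedMeet {L : Set (List A)} (hL : IsWheelerLang L) :
    InterlacedMeet L Colex := by
  obtain ⟨n, M, r, hr, rfl⟩ := hL
  exact hr.interlacedMeet

end Wheeler

section Loops

variable {A Q : Type} {M : PDFA A Q} {R : List A → List A → Prop} [IsSuffixOrder R]
  {u v y z : List A}

theorem rc_append_eq_of_interlaced_loops (hM : InterlacedMeet M.accepts R)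
    (hu : M.eval (u ++ y) = M.eval u) (hv : M.eval (v ++ y) = M.eval v)
    (huz : u ++ z ∈ Pref M.accepts) (hvz : v ++ z ∈ Pref M.accepts)
    (huv : R u v) (hvu : R v (u ++ y)) : rc M.accepts (u ++ z) = rc M.accepts (v ++ z) := by
  obtain ⟨i, hi⟩ := hM (fun i => u ++ wpow y i ++ z) (fun i => v ++ wpow y i ++ z)
    (fun i => mem_pref_of_rc_eq (PDFA.rc_append_wpow_append hu z i).symm huz)
    (fun i => mem_pref_of_rc_eq (PDFA.rc_append_wpow_append hv z i).symm hvz)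
    (Or.inl fun i => by
      simp only [← append_append_wpow, IsSuffixOrder.append_right_iff]
      exact ⟨huv, hvu⟩)
  rwa [PDFA.rc_append_wpow_append hu, PDFA.rc_append_wpow_append hv] at hi

theorem append_rel_of_loops (hM : InterlacedMeet M.accepts R) (hy : y ≠ [])
    (hu : M.eval (u ++ y) = M.eval u) (hv : M.eval (v ++ y) = M.eval v)
    (huz : u ++ z ∈ Pref M.accepts) (hvz : v ++ z ∈ Pref M.accepts)
    (hne : rc M.accepts (u ++ z) ≠ rc M.accepts (v ++ z)) (huv : R u v) : R (v ++ y) v := by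
  refine (IsSuffixOrder.rel_append_or_append_rel hy v).resolve_left fun hvy => hne ?_
  obtain ⟨m, hm⟩ := IsSuffixOrder.exists_forall_rel_append_wpow hy hvy
  exact rc_append_eq_of_interlaced_loops hM (PDFA.eval_append_wpow hu m)
    (PDFA.eval_append_wpow hv m) huz hvz huv (hm u)

theorem rc_append_append_eq_of_square_loop (hM : InterlacedMeet M.accepts R) (hy : y ≠ [])
    (hv : M.eval (v ++ y ++ y) = M.eval v) (hvz : v ++ z ∈ Pref M.accepts)
    (hvyz : v ++ y ++ z ∈ Pref M.accepts) :
    rc M.accepts (v ++ z) = rc M.accepts (v ++ y ++ z) := by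
  have hv' : M.eval (v ++ (y ++ y)) = M.eval v := by rwa [← List.append_assoc]
  have hvy' : M.eval (v ++ y ++ (y ++ y)) = M.eval (v ++ y) := by
    rw [← List.append_assoc, PDFA.eval_append_congr hv]
  rcases IsSuffixOrder.rel_append_or_append_rel (R := R) hy v with h | h
  · exact rc_append_eq_of_interlaced_loops hM hv' hvy' hvz hvyz h
      (by rw [← List.append_assoc]; exact IsSuffixOrder.append_right h y)
  · exact rc_append_eq_of_interlaced_loops hM.swap hv' hvy' hvz hvyz h
      (by rw [← List.append_assoc]; exact IsSuffixOrder.append_right (R := R) h y)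

end Loops

section Positions

variable {A Q : Type} {M : PDFA A Q} {R : List A → List A → Prop} [IsSuffixOrder R]
  {τ γ : List A} {k l : ℕ}

theorem rc_eq_of_evalBefore_swap (hM : InterlacedMeet M.accepts R) (hτ : τ ∈ Pref M.accepts)
    (hγ : γ ∈ Pref M.accepts) (hk : k ≤ γ.length) (hl : l ≤ γ.length) {p q : Q}
    (hqk : M.eval (γ.take k) = some q) (hpk : M.evalBefore τ (γ.drop k) = some p)
    (hpl : M.eval (γ.take l) = some p) (hql : M.evalBefore τ (γ.drop l) = some q) :
    rc M.accepts τ = rc M.accepts γ := by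
  wlog hkl : k ≤ l generalizing k l p q
  · exact this hl hk hpl hql hqk hpk (le_of_not_ge hkl)
  obtain ⟨u, rfl, hu⟩ := PDFA.exists_eq_append_of_evalBefore_eq_some hpk
  rcases hkl.eq_or_lt with rfl | hlt
  · rw [PDFA.rc_accepts_congr (PDFA.eval_append_congr (hu.trans hpl.symm) _),
      List.take_append_drop]
  obtain ⟨y, hy, htake, hdrop⟩ := exists_take_eq_drop_eq γ hlt hl
  rw [hdrop, ← List.append_assoc] at hτ hql ⊢
  rw [PDFA.evalBefore_append] at hql
  rw [htake] at hpl
  have hloop : M.eval (γ.take k ++ y ++ y) = M.eval (γ.take k) := by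
    rw [PDFA.eval_append_congr (hpl.trans hu.symm), hql, hqk]
  have hτz := PDFA.rc_accepts_congr (PDFA.eval_append_congr (hql.trans hqk.symm) (γ.drop l))
  have hγz : γ.take k ++ y ++ γ.drop l = γ := by rw [← htake, List.take_append_drop]
  rw [hτz, rc_append_append_eq_of_square_loop hM hy hloop (mem_pref_of_rc_eq hτz hτ)
    (by rwa [hγz]), hγz]

/-- The pairs `(q, p)` such that some factorization of `γ` as `v ++ z` has `v` reaching `q` and
`τ`, with its suffix `z` removed, reaching `p`. -/
noncomputable def statePairs [Fintype Q] (M : PDFA A Q) (τ γ : List A) : Finset (Q × Q) :=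
  open Classical in
  Finset.univ.filter fun s => ∃ k ≤ γ.length,
    M.eval (γ.take k) = some s.1 ∧ M.evalBefore τ (γ.drop k) = some s.2

theorem mem_statePairs [Fintype Q] {p q : Q} :
    (q, p) ∈ statePairs M τ γ ↔
      ∃ k ≤ γ.length, M.eval (γ.take k) = some q ∧ M.evalBefore τ (γ.drop k) = some p := by
  simp [statePairs]

theorem two_mul_card_statePairs_add_card_le [Fintype Q] (hM : InterlacedMeet M.accepts R)
    (hτ : τ ∈ Pref M.accepts) (hγ : γ ∈ Pref M.accepts)
    (hne : rc M.accepts τ ≠ rc M.accepts γ) :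
    2 * (statePairs M τ γ).card + Fintype.card Q ≤ Fintype.card Q ^ 2 := by
  refine two_mul_card_add_card_le_of_asymm fun q p hqp hpq => hne ?_
  obtain ⟨k, hk, hqk, hpk⟩ := mem_statePairs.1 hqp
  obtain ⟨l, hl, hpl, hql⟩ := mem_statePairs.1 hpq
  exact rc_eq_of_evalBefore_swap hM hτ hγ hk hl hqk hpk hpl hql

open Classical in
/-- The lengths of the prefixes of `γ` that reach `q`. -/
noncomputable def visits (M : PDFA A Q) (γ : List A) (q : Q) : Finset ℕ :=
  (Finset.range (γ.length + 1)).filter fun k => M.eval (γ.take k) = some q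

theorem mem_visits {q : Q} :
    k ∈ visits M γ q ↔ k ≤ γ.length ∧ M.eval (γ.take k) = some q := by
  simp [visits]

open Classical in
theorem card_image_evalBefore_visits_le [Fintype Q] (τ : List A) (q : Q) :
    ((visits M γ q).image fun k => M.evalBefore τ (γ.drop k)).card ≤
      ((statePairs M τ γ).filter fun s => s.1 = q).card + 1 := by
  have hsub : ((visits M γ q).image fun k => M.evalBefore τ (γ.drop k)) ⊆
      Finset.insertNone (((statePairs M τ γ).filter fun s => s.1 = q).image Prod.snd) := by
    intro o ho
    obtain ⟨k, hk, rfl⟩ := Finset.mem_image.1 ho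
    obtain ⟨hk, hqk⟩ := mem_visits.1 hk
    refine Finset.mem_insertNone.2 fun p hp => Finset.mem_image.2 ⟨(q, p), ?_, rfl⟩
    exact Finset.mem_filter.2 ⟨mem_statePairs.2 ⟨k, hk, hqk, hp⟩, rfl⟩
  grw [hsub, Finset.card_insertNone, Finset.card_image_le]

theorem length_lt_sum_card_visits [Fintype Q] (hγ : γ ∈ Pref M.accepts) :
    γ.length < ∑ q, (visits M γ q).card := by
  classical
  have hcover : Finset.range (γ.length + 1) ⊆ Finset.univ.biUnion (visits M γ) := by
    intro k hk
    obtain ⟨q, hq⟩ := PDFA.exists_eval_eq_some (M := M) (x := γ.take k) (y := γ.drop k)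
      (by rwa [List.take_append_drop])
    exact Finset.mem_biUnion.2
      ⟨q, Finset.mem_univ q, mem_visits.2 ⟨Finset.mem_range_succ_iff.1 hk, hq⟩⟩
  simpa using (Finset.card_le_card hcover).trans Finset.card_biUnion_le

end Positions

/-- `γ` is a prefix of `L` strictly between `α` and `β`, with a right context different from
theirs, and of least length among the words between them with its right context. -/
structure IsShortestBetween {A : Type} (L : Set (List A)) (R : List A → List A → Prop)
    (α β γ : List A) : Prop where
  left_mem : α ∈ Pref L
  right_mem : β ∈ Pref L
  mem : γ ∈ Pref L
  rc_left_ne : rc L α ≠ rc L γ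
  rc_right_ne : rc L β ≠ rc L γ
  left_rel : R α γ
  rel_right : R γ β
  length_le : ∀ γ', rc L γ' = rc L γ → R α γ' → R γ' β → γ.length ≤ γ'.length

namespace IsShortestBetween

variable {A Q : Type} {M : PDFA A Q} {R : List A → List A → Prop} {α β γ : List A} {e k l : ℕ}

theorem swap {L : Set (List A)} (h : IsShortestBetween L R α β γ) :
    IsShortestBetween L (Function.swap R) β α γ where
  left_mem := h.right_mem
  right_mem := h.left_mem
  mem := h.mem
  rc_left_ne := h.rc_right_ne
  rc_right_ne := h.rc_left_ne
  left_rel := h.rel_right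
  rel_right := h.left_rel
  length_le γ' hrc hβ hα := h.length_le γ' hrc hα hβ

variable [IsSuffixOrder R]

theorem not_rel_take_append_drop (h : IsShortestBetween M.accepts R α β γ) (hkl : k < l)
    (hl : l ≤ γ.length) (heval : M.eval (γ.take k) = M.eval (γ.take l))
    (hrel : R (γ.take k) (γ.take l)) : ¬ R α (γ.take k ++ γ.drop l) := by
  intro hα
  have hrc : rc M.accepts (γ.take k ++ γ.drop l) = rc M.accepts γ := by
    rw [PDFA.rc_accepts_congr (PDFA.eval_append_congr heval _), List.take_append_drop]
  have hβ : R (γ.take k ++ γ.drop l) β := by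
    refine _root_.trans ?_ h.rel_right
    simpa only [List.take_append_drop] using IsSuffixOrder.append_right hrel (γ.drop l)
  have hlen := h.length_le _ hrc hα hβ
  simp only [List.length_append, List.length_take, List.length_drop] at hlen
  omega

theorem take_rel_take_and_left_rel (h : IsShortestBetween M.accepts R α β γ)
    (hM : InterlacedMeet M.accepts R) (hkl : k < l) (hl : l ≤ γ.length)
    (heval : M.eval (γ.take k) = M.eval (γ.take l))
    (hbefore : M.evalBefore α (γ.drop k) = M.evalBefore α (γ.drop l)) :
    R (γ.take l) (γ.take k) ∧ R α (γ.take l ++ γ.drop k) := by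
  obtain ⟨y, hy, htake, hdrop⟩ := exists_take_eq_drop_eq γ hkl hl
  have hαγ : R α (γ.take k ++ γ.drop k) := by simpa using h.left_rel
  by_cases hsuffix : γ.drop k <:+ α
  · obtain ⟨u, rfl⟩ := hsuffix
    have huv : R u (γ.take k) := IsSuffixOrder.append_right_iff.1 hαγ
    have hu : M.eval (u ++ y) = M.eval u := by
      rw [PDFA.evalBefore_append, hdrop, ← List.append_assoc, PDFA.evalBefore_append] at hbefore
      exact hbefore.symm
    have hv : M.eval (γ.take k ++ y) = M.eval (γ.take k) := by rw [← htake, heval]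
    have hγ : γ.take k ++ γ.drop k ∈ Pref M.accepts := by simpa using h.mem
    have hne : rc M.accepts (u ++ γ.drop k) ≠ rc M.accepts (γ.take k ++ γ.drop k) := by
      simpa using h.rc_left_ne
    have huy : R u (u ++ y) :=
      append_rel_of_loops hM.swap hy hv hu hγ h.left_mem hne.symm huv
    rw [htake]
    exact ⟨append_rel_of_loops hM hy hu hv h.left_mem hγ hne huv,
      IsSuffixOrder.append_right (_root_.trans huy (IsSuffixOrder.append_right huv y)) _⟩
  · have hsuffix' : ¬ γ.drop l <:+ α := fun hs =>
      hsuffix (PDFA.suffix_congr_of_evalBefore_eq h.left_mem hbefore.symm hs)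
    refine ⟨?_, IsSuffixOrder.append_of_not_suffix hsuffix hαγ _⟩
    have hα : R α (γ.take k ++ γ.drop l) :=
      IsSuffixOrder.append_of_not_suffix hsuffix' (g := γ.take l) (by simpa using h.left_rel) _
    have hnot := fun hrel => h.not_rel_take_append_drop hkl hl heval hrel hα
    rw [htake] at hnot ⊢
    exact (IsSuffixOrder.rel_append_or_append_rel hy _).resolve_left hnot

theorem lt_of_evalBefore_eq (h : IsShortestBetween M.accepts R α β γ)
    (hM : InterlacedMeet M.accepts R) (hk : k ≤ γ.length) (hl : l ≤ γ.length)
    (hkl : M.eval (γ.take k) = M.eval (γ.take l)) (hel : M.eval (γ.take e) = M.eval (γ.take l))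
    (hbefore : M.evalBefore α (γ.drop k) = M.evalBefore α (γ.drop l))
    (hrel : R (γ.take k) (γ.take l)) (hke : ¬ R (γ.take e) (γ.take k))
    (hrel' : R (γ.take e) (γ.take l)) : l < e := by
  have hlk : l < k := by
    rcases lt_trichotomy k l with hlt | rfl | hgt
    · exact absurd hrel (asymm (h.take_rel_take_and_left_rel hM hlt hl hkl hbefore).1)
    · exact absurd hrel (irrefl _)
    · exact hgt
  rcases lt_trichotomy l e with hlt | rfl | hgt
  · exact hlt
  · exact absurd hrel' (irrefl _)
  have hα : R α (γ.take k ++ γ.drop l) :=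
    (h.take_rel_take_and_left_rel hM hlk hk hkl.symm hbefore.symm).2
  refine absurd ?_ (h.not_rel_take_append_drop hgt hl hel hrel')
  rcases trichotomous_of R (γ.take e) (γ.take k) with hlt | heq | hgt
  · exact absurd hlt hke
  · rwa [heq]
  · exact _root_.trans hα (IsSuffixOrder.append_right hgt _)

variable [LinearOrder A]

open Classical in
theorem card_visits_lt (h : IsShortestBetween M.accepts Colex α β γ)
    (hM : InterlacedMeet M.accepts Colex) {q : Q} (hq : (visits M γ q).Nonempty) :
    (visits M γ q).card < ((visits M γ q).image fun k => M.evalBefore α (γ.drop k)).card +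
      ((visits M γ q).image fun k => M.evalBefore β (γ.drop k)).card := by
  have hlen {k} (hk : k ∈ visits M γ q) : k ≤ γ.length := (mem_visits.1 hk).1
  have heval {k l} (hk : k ∈ visits M γ q) (hl : l ∈ visits M γ q) :
      M.eval (γ.take k) = M.eval (γ.take l) :=
    (mem_visits.1 hk).2.trans (mem_visits.1 hl).2.symm
  refine card_lt_card_image_add_card_image hq (w := fun k => (γ.take k).reverse) ?_ ?_ ?_
  · intro k hk l hl hkl
    simpa [hlen hk, hlen hl] using congrArg List.length hkl
  · intro k hk l hl hkl hbefore e he hke hel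
    exact h.lt_of_evalBefore_eq hM (hlen hk) (hlen hl) (heval hk hl) (heval he hl) hbefore hkl
      (not_lt.2 hke) hel
  · intro l hl k hk hlk hbefore e he hle hek
    exact h.swap.lt_of_evalBefore_eq hM.swap (hlen hk) (hlen hl) (heval hk hl) (heval he hl)
      hbefore.symm hlk (not_lt.2 hek) hle

open Classical in
theorem card_visits_le [Fintype Q] (h : IsShortestBetween M.accepts Colex α β γ)
    (hM : InterlacedMeet M.accepts Colex) (q : Q) :
    (visits M γ q).card ≤ ((statePairs M α γ).filter fun s => s.1 = q).card +
      ((statePairs M β γ).filter fun s => s.1 = q).card + 1 := by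
  rcases (visits M γ q).eq_empty_or_nonempty with hq | hq
  · simp [hq]
  · have hlt := h.card_visits_lt hM hq
    have hα := card_image_evalBefore_visits_le (M := M) (γ := γ) α q
    have hβ := card_image_evalBefore_visits_le (M := M) (γ := γ) β q
    omega

theorem length_lt [Fintype Q] (h : IsShortestBetween M.accepts Colex α β γ)
    (hM : InterlacedMeet M.accepts Colex) : γ.length < Fintype.card Q ^ 2 := by
  classical
  have sum_card_fibers (D : Finset (Q × Q)) :
      ∑ q, (D.filter fun s => s.1 = q).card = D.card :=
    (Finset.card_eq_sum_card_fiberwise fun _ _ => Finset.mem_coe.2 (Finset.mem_univ _)).symm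
  have hα := two_mul_card_statePairs_add_card_le hM h.left_mem h.mem h.rc_left_ne
  have hβ := two_mul_card_statePairs_add_card_le hM h.right_mem h.mem h.rc_right_ne
  calc γ.length < ∑ q, (visits M γ q).card := length_lt_sum_card_visits h.mem
    _ ≤ ∑ q, (((statePairs M α γ).filter fun s => s.1 = q).card +
          ((statePairs M β γ).filter fun s => s.1 = q).card + 1) :=
        Finset.sum_le_sum fun q _ => h.card_visits_le hM q
    _ = (statePairs M α γ).card + (statePairs M β γ).card + Fintype.card Q := by
        simp only [Finset.sum_add_distrib, sum_card_fibers, Finset.sum_const, Finset.card_univ,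
          smul_eq_mul, mul_one]
    _ ≤ Fintype.card Q ^ 2 := by omega

end IsShortestBetween

section Main

variable {A Q : Type} [LinearOrder A] [Fintype Q] {L : Set (List A)} {α β : List A}

theorem exists_between_length_lt (hL : InterlacedMeet L Colex) (M : PDFA A Q) (hM : M.accepts = L)
    (hα : α ∈ Pref L) (hβ : β ∈ Pref L) {γ : List A} (hγ : γ ∈ Pref L)
    (hαγ : Colex α γ) (hγβ : Colex γ β) (hneα : rc L α ≠ rc L γ) (hneβ : rc L β ≠ rc L γ) :
    ∃ γ' ∈ Pref L, Colex α γ' ∧ Colex γ' β ∧ γ'.length < Fintype.card Q ^ 2 := by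
  subst hM
  obtain ⟨γ', ⟨hrc, hαγ', hγβ'⟩, hmin⟩ := exists_minimalFor_of_wellFoundedLT
    (fun γ' => rc M.accepts γ' = rc M.accepts γ ∧ Colex α γ' ∧ Colex γ' β) List.length
    ⟨γ, rfl, hαγ, hγβ⟩
  have hγ' : γ' ∈ Pref M.accepts := mem_pref_of_rc_eq hrc.symm hγ
  have hshort : IsShortestBetween M.accepts Colex α β γ' :=
    { left_mem := hα, right_mem := hβ, mem := hγ'
      rc_left_ne := hrc ▸ hneα, rc_right_ne := hrc ▸ hneβ
      left_rel := hαγ', rel_right := hγβ'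
      length_le := fun γ'' hrc' hα' hβ' =>
        (le_total γ'.length γ''.length).elim id (hmin ⟨hrc'.trans hrc, hα', hβ'⟩) }
  exact ⟨γ', hγ', hαγ', hγβ', hshort.length_lt hL⟩

theorem equivC_iff_of_colex (h : Colex α β) :
    EquivC L α β ↔ rc L α = rc L β ∧ α.getLast? = β.getLast? ∧
      ∀ γ ∈ Pref L, Colex α γ → Colex γ β → rc L γ = rc L α := by
  refine and_congr_right fun hrc => and_congr_right fun _ => forall₂_congr fun γ _ => ⟨?_, ?_⟩
  · exact fun hγ hα hβ => hγ (Or.inl ⟨Or.inl hα, Or.inl hβ⟩)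
  · rintro hγ (⟨hα | rfl, hβ | rfl⟩ | ⟨hβ | rfl, hα | rfl⟩)
    · exact hγ hα hβ
    · exact hrc.symm
    · rfl
    · rfl
    · exact absurd (_root_.trans hβ hα) (asymm h)
    · rfl
    · exact hrc.symm
    · rfl

theorem statement19_general {ι : Type*} [LinearOrder ι] (hL : IsWheelerLang L)
    (M : PDFA A Q) (hM : M.accepts = L) {w : ι → List A} (hmem : ∀ i, w i ∈ Pref L)
    (hsorted : ∀ i j, i < j → Colex (w i) (w j))
    (hcomplete : ∀ x ∈ Pref L, x.length < Fintype.card Q ^ 2 → ∃ i, w i = x)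
    {i j : ι} (hij : i ⋖ j) :
    EquivC L (w i) (w j) ↔ rc L (w i) = rc L (w j) ∧ (w i).getLast? = (w j).getLast? := by
  have hlt {a b : ι} (h : Colex (w a) (w b)) : a < b := by
    rcases lt_trichotomy a b with hab | rfl | hba
    · exact hab
    · exact absurd h (irrefl _)
    · exact absurd h (asymm (hsorted _ _ hba))
  rw [equivC_iff_of_colex (hsorted i j hij.lt)]
  refine and_congr_right fun hrc => and_iff_left fun γ hγ hiγ hγj => ?_
  by_contra hne
  obtain ⟨γ', hγ', hiγ', hγj', hlen⟩ := exists_between_length_lt hL.interlacedMeet M hM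
    (hmem i) (hmem j) hγ hiγ hγj (Ne.symm hne) (hrc ▸ Ne.symm hne)
  obtain ⟨a, rfl⟩ := hcomplete γ' hγ' hlen
  exact hij.2 (hlt hiγ') (hlt hγj')

end Main

section Statement19

/-- listing `Pref(L)^{≤d}` (`d = n + n²`, `n` the size of the
minimum DFA of the Wheeler language `L`) in co-lexicographic order, two
consecutive words are `≡^c_L`-equivalent iff they are Myhill–Nerode equivalent
and end with the same character. -/
theorem statement19 {A : Type} [Fintype A] [LinearOrder A]
    (L : Set (List A)) (hW : IsWheelerLang L)
    {n : ℕ} (M : PDFA A (Fin n)) (hacc : M.accepts = L)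
    (hmin : ∀ (m : ℕ) (M' : PDFA A (Fin m)), M'.accepts = L → n ≤ m)
    (d : ℕ) (hd : d = n + n ^ 2)
    (k : ℕ) (α : Fin k → List A)
    (hmem : ∀ i, α i ∈ Pref L ∧ (α i).length ≤ d)
    (hsorted : ∀ i j : Fin k, i < j → Colex (α i) (α j))
    (hcomplete : ∀ w ∈ Pref L, w.length ≤ d → ∃ i, α i = w) :
    ∀ (j : ℕ) (h1 : j < k) (h2 : j + 1 < k),
      (EquivC L (α ⟨j, h1⟩) (α ⟨j + 1, h2⟩) ↔
        (rc L (α ⟨j, h1⟩) = rc L (α ⟨j + 1, h2⟩) ∧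
         (α ⟨j, h1⟩).getLast? = (α ⟨j + 1, h2⟩).getLast?)) := by
  intro j h1 h2
  refine statement19_general hW M hacc (fun i => (hmem i).1) hsorted
    (fun x hx hlen => hcomplete x hx ?_) (Fin.covBy_iff.2 (Order.covBy_add_one j))
  rw [Fintype.card_fin] at hlen
  omega

end Statement19

end WheelerPaper
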